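/- There exist constants C_l, C_u > 0, depending only on k, ℓ and L₀, such that for every quasi shell solution y and every r ∈ [R₀, 2R₀] with γ(r) ≥ 0 one has C_l γ(r)^{k+ℓ+5/2}/r⁴ ≤ p(r) ≤ C_u γ(r)^{k+ℓ+5/2}/r⁴. -/

import Mathlib

open MeasureTheory Real Set Filter

/-- The constant `c_ℓ = 2π ∫₀¹ s^ℓ (1-s)^{-1/2} ds`. -/
noncomputable def cConst (ℓ : ℝ) : ℝ :=
  2 * π * ∫ s in Set.Ioc (0 : ℝ) 1, s ^ ℓ / Real.sqrt (1 - s)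

/-- Energy density of the massless Einstein--Vlasov ansatz. -/
noncomputable def rho (k ℓ L0 : ℝ) (y : ℝ → ℝ) (r : ℝ) : ℝ :=
  cConst ℓ * r ^ (2 * ℓ) *
    ∫ ε in Set.Ioc (Real.sqrt L0 / r) (Real.exp (y r)),
      (1 - ε * Real.exp (-(y r))) ^ k * ε ^ 2 * (ε ^ 2 - L0 / r ^ 2) ^ (ℓ + 1 / 2)

/-- Radial pressure of the massless Einstein--Vlasov ansatz. -/
noncomputable def pres (k ℓ L0 : ℝ) (y : ℝ → ℝ) (r : ℝ) : ℝ :=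
  (cConst ℓ / (2 * ℓ + 3)) * r ^ (2 * ℓ) *
    ∫ ε in Set.Ioc (Real.sqrt L0 / r) (Real.exp (y r)),
      (1 - ε * Real.exp (-(y r))) ^ k * (ε ^ 2 - L0 / r ^ 2) ^ (ℓ + 3 / 2)

/-- The Hawking mass `m(r) = 4π ∫₀ʳ s² ϱ(s) ds`. -/
noncomputable def hawkingMass (k ℓ L0 : ℝ) (y : ℝ → ℝ) (r : ℝ) : ℝ :=
  4 * π * ∫ s in Set.Ioc (0 : ℝ) r, s ^ 2 * rho k ℓ L0 y s

/-- The characteristic function `γ(r) = y(r) - (1/2) ln (L₀ / r²)`. -/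
noncomputable def charFn (L0 : ℝ) (y : ℝ → ℝ) (r : ℝ) : ℝ :=
  y r - (1 / 2) * Real.log (L0 / r ^ 2)

/-- The inner radius `R₀ = √L₀ e^{-y(0)}`. -/
noncomputable def innerRadius (L0 : ℝ) (y : ℝ → ℝ) : ℝ :=
  Real.sqrt L0 * Real.exp (-(y 0))

/-- A quasi shell solution of the massless Einstein--Vlasov system. -/
def QuasiShell (k ℓ L0 : ℝ) (y : ℝ → ℝ) : Prop :=
  ContDiffOn ℝ 1 y (Set.Ici 0) ∧
  ∀ r > 0, 2 * hawkingMass k ℓ L0 y r / r < 1 ∧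
    HasDerivAt y
      (-(1 - 2 * hawkingMass k ℓ L0 y r / r)⁻¹ *
        (4 * π * r * pres k ℓ L0 y r + hawkingMass k ℓ L0 y r / r ^ 2)) r

/-!
Rescaling the energy by `√L₀ / r` shows that `r⁴ p(r)` is a constant times a function of `γ(r)`
alone, namely `∫₁^{e^γ} (1 - x e^{-γ})^k (x² - 1)^{ℓ+3/2} dx`. Up to the factor `(x + 1)^{ℓ+3/2}`,
which lies between two constants when `γ` is bounded, this is a beta integral over `[1, e^γ]`, hence
comparable to `(e^γ - 1)^{k+ℓ+5/2}` and so to `γ^{k+ℓ+5/2}`. For a quasi shell, `y` decreases, which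
means `γ(r) ≤ ln (r / R₀)`, so `γ ≤ ln 2` on `[R₀, 2R₀]`.
-/

/-- The radial pressure in scale-free form. Measuring energies in units of `√L₀ / r` turns
`r ^ 4 * pres k ℓ L0 y r` into a constant multiple of `pressureProfile k (ℓ + 3 / 2) γ` with
`γ = charFn L0 y r`. The integral is over a set, so that the value is `0` for `g ≤ 0`. -/
noncomputable def pressureProfile (k n g : ℝ) : ℝ :=
  ∫ x in Ioc 1 (exp g), (1 - x * exp (-g)) ^ k * (x ^ 2 - 1) ^ n

section BetaIntegral

variable {u v a b : ℝ}

lemma integral_rpow_mul_rpow (hu : -1 < u) (hv : -1 < v) (hab : a < b) :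
    ∫ x in a..b, (x - a) ^ u * (b - x) ^ v =
      (b - a) ^ (u + v + 1) * ProbabilityTheory.beta (u + 1) (v + 1) := by
  have hd : 0 < b - a := sub_pos.2 hab
  have shift : ∫ x in a..b, (x - a) ^ u * (b - x) ^ v =
      ∫ x in (0 : ℝ)..(b - a), x ^ u * (b - a - x) ^ v := by
    simpa using intervalIntegral.integral_comp_sub_right
      (fun x ↦ x ^ u * (b - a - x) ^ v) a (a := a) (b := b)
  have scaled : ((∫ x in (0 : ℝ)..(b - a), x ^ u * (b - a - x) ^ v : ℝ) : ℂ) =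
      ((b - a : ℝ) : ℂ) ^ ((u + v + 1 : ℝ) : ℂ) *
        Complex.betaIntegral (u + 1 : ℝ) (v + 1 : ℝ) := by
    rw [show ((u + v + 1 : ℝ) : ℂ) = (u + 1 : ℝ) + (v + 1 : ℝ) - 1 by push_cast; ring,
      ← Complex.betaIntegral_scaled _ _ hd, ← intervalIntegral.integral_ofReal]
    refine intervalIntegral.integral_congr fun x hx ↦ ?_
    rw [uIcc_of_le hd.le] at hx
    simp [Complex.ofReal_cpow hx.1, ← Complex.ofReal_sub, Complex.ofReal_cpow (sub_nonneg.2 hx.2)]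
  rw [shift, ProbabilityTheory.beta_eq_betaIntegralReal _ _ (by linarith) (by linarith),
    ← Complex.re_ofReal_mul, Complex.ofReal_cpow hd.le, ← scaled, Complex.ofReal_re]

lemma integral_rpow_mul_rpow_pos (hu : -1 < u) (hv : -1 < v) (hab : a < b) :
    0 < ∫ x in a..b, (x - a) ^ u * (b - x) ^ v := by
  rw [integral_rpow_mul_rpow hu hv hab]
  exact mul_pos (rpow_pos_of_pos (sub_pos.2 hab) _)
    (ProbabilityTheory.beta_pos (by linarith) (by linarith))

lemma intervalIntegrable_rpow_mul_rpow (hu : -1 < u) (hv : -1 < v) (hab : a < b) :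
    IntervalIntegrable (fun x ↦ (x - a) ^ u * (b - x) ^ v) volume a b :=
  intervalIntegral.intervalIntegrable_of_integral_ne_zero (integral_rpow_mul_rpow_pos hu hv hab).ne'

end BetaIntegral

section PressureProfile

variable {k n g : ℝ}

lemma pressureProfile_integrand_eq {x : ℝ} (hx : x ∈ Icc 1 (exp g)) :
    (1 - x * exp (-g)) ^ k * (x ^ 2 - 1) ^ n =
      exp (-g) ^ k * ((x - 1) ^ n * (exp g - x) ^ k * (x + 1) ^ n) := by
  have hleft : 1 - x * exp (-g) = exp (-g) * (exp g - x) := by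
    rw [mul_sub, ← exp_add, neg_add_cancel, exp_zero, mul_comm x]
  rw [hleft, show x ^ 2 - 1 = (x - 1) * (x + 1) by ring,
    mul_rpow (exp_nonneg _) (sub_nonneg.2 hx.2),
    mul_rpow (sub_nonneg.2 hx.1) (by linarith [hx.1])]
  ring

lemma pressureProfile_eq_integral (hg : 0 ≤ g) :
    pressureProfile k n g =
      exp (-g) ^ k * ∫ x in 1..exp g, (x - 1) ^ n * (exp g - x) ^ k * (x + 1) ^ n := by
  have hE : 1 ≤ exp g := one_le_exp hg
  rw [pressureProfile, ← intervalIntegral.integral_of_le hE,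
    ← intervalIntegral.integral_const_mul]
  refine intervalIntegral.integral_congr fun x hx ↦ pressureProfile_integrand_eq ?_
  rwa [uIcc_of_le hE] at hx

lemma pressureProfile_bounds (hk : -1 < k) (hn : 0 ≤ n) (hg : 0 < g) :
    2 ^ n * (exp (-g) ^ k *
        ((exp g - 1) ^ (n + k + 1) * ProbabilityTheory.beta (n + 1) (k + 1))) ≤
      pressureProfile k n g ∧
    pressureProfile k n g ≤ (exp g + 1) ^ n * (exp (-g) ^ k *
        ((exp g - 1) ^ (n + k + 1) * ProbabilityTheory.beta (n + 1) (k + 1))) := by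
  have hE : 1 < exp g := one_lt_exp_iff.2 hg
  have hf := intervalIntegrable_rpow_mul_rpow (u := n) (v := k) (by linarith) hk hE
  have hfw : IntervalIntegrable (fun x ↦ (x - 1) ^ n * (exp g - x) ^ k * (x + 1) ^ n)
      volume 1 (exp g) :=
    hf.mul_continuousOn
      ((continuous_id.add continuous_const).rpow_const fun _ ↦ Or.inr hn).continuousOn
  have hnonneg : ∀ x ∈ Icc 1 (exp g), 0 ≤ (x - 1) ^ n * (exp g - x) ^ k := fun x hx ↦
    mul_nonneg (rpow_nonneg (sub_nonneg.2 hx.1) _) (rpow_nonneg (sub_nonneg.2 hx.2) _)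
  have hlower : 2 ^ n * ∫ x in 1..exp g, (x - 1) ^ n * (exp g - x) ^ k ≤
      ∫ x in 1..exp g, (x - 1) ^ n * (exp g - x) ^ k * (x + 1) ^ n := by
    rw [mul_comm, ← intervalIntegral.integral_mul_const]
    refine intervalIntegral.integral_mono_on hE.le (hf.mul_const _) hfw fun x hx ↦ ?_
    exact mul_le_mul_of_nonneg_left
      (rpow_le_rpow zero_le_two (by linarith [hx.1]) hn) (hnonneg x hx)
  have hupper : ∫ x in 1..exp g, (x - 1) ^ n * (exp g - x) ^ k * (x + 1) ^ n ≤
      (exp g + 1) ^ n * ∫ x in 1..exp g, (x - 1) ^ n * (exp g - x) ^ k := by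
    rw [mul_comm, ← intervalIntegral.integral_mul_const]
    refine intervalIntegral.integral_mono_on hE.le hfw (hf.mul_const _) fun x hx ↦ ?_
    exact mul_le_mul_of_nonneg_left
      (rpow_le_rpow (by linarith [hx.1]) (by linarith [hx.2]) hn) (hnonneg x hx)
  rw [pressureProfile_eq_integral hg.le, ← integral_rpow_mul_rpow (by linarith) hk hE,
    mul_left_comm, mul_left_comm ((exp g + 1) ^ n)]
  have hpre : 0 ≤ exp (-g) ^ k := rpow_nonneg (exp_nonneg _) _
  exact ⟨mul_le_mul_of_nonneg_left hlower hpre, mul_le_mul_of_nonneg_left hupper hpre⟩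

lemma exp_sub_one_le_mul_exp (x : ℝ) : exp x - 1 ≤ x * exp x := by
  have h := mul_le_mul_of_nonneg_right (one_sub_le_exp_neg x) (exp_nonneg x)
  rw [← exp_add, neg_add_cancel, exp_zero] at h
  linarith

lemma exp_neg_rpow_mem_Icc {G : ℝ} (hg : 0 ≤ g) (hgG : g ≤ G) :
    exp (-g) ^ k ∈ Icc (exp (-(|k| * G))) (exp (|k| * G)) := by
  have h : |-g * k| ≤ |k| * G := by
    rw [abs_mul, abs_neg, abs_of_nonneg hg, mul_comm]
    gcongr
  rw [← exp_mul]
  exact ⟨exp_le_exp.2 (abs_le.1 h).1, exp_le_exp.2 (abs_le.1 h).2⟩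

lemma exists_pressureProfile_bounds (hk : -1 < k) (hn : 0 ≤ n) (G : ℝ) :
    ∃ c C : ℝ, 0 < c ∧ 0 < C ∧ ∀ g, 0 ≤ g → g ≤ G →
      c * g ^ (k + n + 1) ≤ pressureProfile k n g ∧
      pressureProfile k n g ≤ C * g ^ (k + n + 1) := by
  have hB : 0 < ProbabilityTheory.beta (n + 1) (k + 1) :=
    ProbabilityTheory.beta_pos (by linarith) (by linarith)
  have hq : 0 < n + k + 1 := by linarith
  set B := ProbabilityTheory.beta (n + 1) (k + 1)
  refine ⟨2 ^ n * (exp (-(|k| * G)) * B),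
    (exp G + 1) ^ n * (exp (|k| * G) * (exp G ^ (n + k + 1) * B)),
    by positivity, by positivity, fun g hg hgG ↦ ?_⟩
  rw [add_comm k n]
  rcases hg.eq_or_lt with rfl | hg'
  · simp [pressureProfile, zero_rpow hq.ne']
  obtain ⟨hlower, hupper⟩ := pressureProfile_bounds hk hn hg'
  obtain ⟨hfactor_ge, hfactor_le⟩ := exp_neg_rpow_mem_Icc (k := k) hg hgG
  have hsub_nonneg : 0 ≤ exp g - 1 := sub_nonneg.2 (one_le_exp hg)
  constructor
  · calc 2 ^ n * (exp (-(|k| * G)) * B) * g ^ (n + k + 1)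
        = 2 ^ n * (exp (-(|k| * G)) * (g ^ (n + k + 1) * B)) := by ring
      _ ≤ 2 ^ n * (exp (-g) ^ k * ((exp g - 1) ^ (n + k + 1) * B)) := by
        gcongr
        linarith [add_one_le_exp g]
      _ ≤ pressureProfile k n g := hlower
  · calc pressureProfile k n g
        ≤ (exp g + 1) ^ n * (exp (-g) ^ k * ((exp g - 1) ^ (n + k + 1) * B)) := hupper
      _ ≤ (exp G + 1) ^ n * (exp (|k| * G) * ((g * exp G) ^ (n + k + 1) * B)) := by
        gcongr
        exact (exp_sub_one_le_mul_exp g).trans (by gcongr)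
      _ = (exp G + 1) ^ n * (exp (|k| * G) * (exp G ^ (n + k + 1) * B)) * g ^ (n + k + 1) := by
        rw [mul_rpow hg (exp_nonneg _)]
        ring

open scoped Pointwise in
lemma setIntegral_Ioc_mul_exp_eq {a : ℝ} (ha : 0 < a) (k n g : ℝ) :
    ∫ ε in Ioc a (a * exp g), (1 - ε * (a * exp g)⁻¹) ^ k * (ε ^ 2 - a ^ 2) ^ n =
      a ^ (2 * n + 1) * pressureProfile k n g := by
  have hset : Ioc a (a * exp g) = a • Ioc 1 (exp g) := by
    rw [LinearOrderedField.smul_Ioc ha, mul_one]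
  have hscale := Measure.setIntegral_comp_smul_of_pos volume
    (fun ε ↦ (1 - ε * (a * exp g)⁻¹) ^ k * (ε ^ 2 - a ^ 2) ^ n) (Ioc 1 (exp g)) ha
  rw [Module.finrank_self, pow_one, eq_inv_smul_iff₀ ha.ne', ← hset] at hscale
  have hintegrand : ∀ x ∈ Ioc 1 (exp g),
      (1 - a • x * (a * exp g)⁻¹) ^ k * ((a • x) ^ 2 - a ^ 2) ^ n =
        a ^ (2 * n) * ((1 - x * exp (-g)) ^ k * (x ^ 2 - 1) ^ n) := fun x hx ↦ by
    have henergy : a • x * (a * exp g)⁻¹ = x * exp (-g) := by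
      rw [exp_neg, smul_eq_mul]
      field_simp
    have hmomentum : (a • x) ^ 2 - a ^ 2 = a ^ 2 * (x ^ 2 - 1) := by
      rw [smul_eq_mul]
      ring
    rw [henergy, hmomentum, mul_rpow (sq_nonneg a) (by nlinarith [hx.1]), rpow_mul ha.le, rpow_two]
    ring
  rw [← hscale, setIntegral_congr_fun measurableSet_Ioc hintegrand, integral_const_mul,
    ← pressureProfile, rpow_add_one ha.ne', smul_eq_mul]
  ring

end PressureProfile

section Matter

variable {k ℓ L0 r : ℝ} {y : ℝ → ℝ}

lemma cConst_nonneg (ℓ : ℝ) : 0 ≤ cConst ℓ :=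
  mul_nonneg (by positivity) (setIntegral_nonneg measurableSet_Ioc fun s hs ↦
    div_nonneg (rpow_nonneg hs.1.le _) (sqrt_nonneg _))

lemma cConst_pos (hl : -1 < ℓ) : 0 < cConst ℓ := by
  have hcongr : ∫ s in Ioc (0 : ℝ) 1, s ^ ℓ / √(1 - s) =
      ∫ s in (0 : ℝ)..1, (s - 0) ^ ℓ * (1 - s) ^ (-(1 / 2) : ℝ) := by
    rw [intervalIntegral.integral_of_le zero_le_one]
    refine setIntegral_congr_fun measurableSet_Ioc fun s hs ↦ ?_
    simp only [sub_zero, div_eq_mul_inv, rpow_neg (sub_nonneg.2 hs.2), sqrt_eq_rpow]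
  rw [cConst, hcongr]
  exact mul_pos two_pi_pos (integral_rpow_mul_rpow_pos hl (by norm_num) zero_lt_one)

lemma one_sub_mul_exp_neg_nonneg {ε Y : ℝ} (h : ε ≤ exp Y) : 0 ≤ 1 - ε * exp (-Y) := by
  rw [exp_neg, ← div_eq_mul_inv, sub_nonneg]
  exact div_le_one_of_le₀ h (exp_nonneg Y)

lemma sq_sub_div_sq_nonneg {ε : ℝ} (hr : 0 ≤ r) (h : √L0 / r ≤ ε) :
    0 ≤ ε ^ 2 - L0 / r ^ 2 := by
  have hsqrt : √(L0 / r ^ 2) ≤ ε := by rwa [sqrt_div' _ (sq_nonneg r), sqrt_sq hr]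
  exact sub_nonneg.2 (sqrt_le_iff.1 hsqrt).2

lemma rho_nonneg (hr : 0 ≤ r) : 0 ≤ rho k ℓ L0 y r := by
  refine mul_nonneg (mul_nonneg (cConst_nonneg ℓ) (rpow_nonneg hr _))
    (setIntegral_nonneg measurableSet_Ioc fun ε hε ↦ ?_)
  have := one_sub_mul_exp_neg_nonneg hε.2
  have := sq_sub_div_sq_nonneg hr hε.1.le
  positivity

lemma pres_nonneg (hl : -(3 / 2) ≤ ℓ) (hr : 0 ≤ r) : 0 ≤ pres k ℓ L0 y r := by
  refine mul_nonneg (mul_nonneg (div_nonneg (cConst_nonneg ℓ) (by linarith)) (rpow_nonneg hr _))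
    (setIntegral_nonneg measurableSet_Ioc fun ε hε ↦ ?_)
  have := one_sub_mul_exp_neg_nonneg hε.2
  have := sq_sub_div_sq_nonneg hr hε.1.le
  positivity

lemma hawkingMass_nonneg : 0 ≤ hawkingMass k ℓ L0 y r :=
  mul_nonneg (by positivity) (setIntegral_nonneg measurableSet_Ioc fun s hs ↦
    mul_nonneg (sq_nonneg s) (rho_nonneg hs.1.le))

lemma charFn_eq_sub_log (hL : 0 ≤ L0) (hr : 0 ≤ r) :
    charFn L0 y r = y r - log (√L0 / r) := by
  rw [charFn, ← sqrt_sq hr, ← sqrt_div' _ (sq_nonneg r), log_sqrt (by positivity), sqrt_sq hr]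
  ring

lemma sqrt_div_mul_exp_charFn (hL : 0 < L0) (hr : 0 < r) :
    √L0 / r * exp (charFn L0 y r) = exp (y r) := by
  have ha : 0 < √L0 / r := by positivity
  rw [charFn_eq_sub_log hL.le hr.le, exp_sub, exp_log ha, mul_div_cancel₀ _ ha.ne']

lemma pres_eq_mul_pressureProfile (hL : 0 < L0) (hr : 0 < r) :
    pres k ℓ L0 y r = cConst ℓ / (2 * ℓ + 3) * L0 ^ (ℓ + 2) / r ^ 4 *
      pressureProfile k (ℓ + 3 / 2) (charFn L0 y r) := by
  have hsq : L0 / r ^ 2 = (√L0 / r) ^ 2 := by rw [div_pow, sq_sqrt hL.le]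
  have hpow : r ^ (2 * ℓ) * (√L0 / r) ^ (2 * (ℓ + 3 / 2) + 1) = L0 ^ (ℓ + 2) / r ^ 4 := by
    rw [show 2 * (ℓ + 3 / 2) + 1 = 2 * (ℓ + 2) by ring,
      rpow_mul (div_nonneg (sqrt_nonneg L0) hr.le), rpow_two,
      ← hsq, div_rpow hL.le (sq_nonneg r), ← rpow_two, ← rpow_mul hr.le, mul_add, rpow_add hr,
      show (2 * 2 : ℝ) = (4 : ℕ) by norm_num, rpow_natCast]
    field_simp
  rw [pres, hsq, exp_neg, ← sqrt_div_mul_exp_charFn hL hr,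
    setIntegral_Ioc_mul_exp_eq (by positivity), mul_div_assoc, ← hpow]
  ring

theorem pres_bounds_general (hk : -1 < k) (hl : -1 < ℓ) (hL : 0 < L0) (G : ℝ) :
    ∃ Cl Cu : ℝ, 0 < Cl ∧ 0 < Cu ∧
      ∀ (y : ℝ → ℝ) (r : ℝ), 0 < r → 0 ≤ charFn L0 y r → charFn L0 y r ≤ G →
        Cl * charFn L0 y r ^ (k + ℓ + 5 / 2) / r ^ 4 ≤ pres k ℓ L0 y r ∧
        pres k ℓ L0 y r ≤ Cu * charFn L0 y r ^ (k + ℓ + 5 / 2) / r ^ 4 := by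
  obtain ⟨c, C, hc, hC, hprofile⟩ :=
    exists_pressureProfile_bounds hk (n := ℓ + 3 / 2) (by linarith) G
  have hA : 0 < cConst ℓ / (2 * ℓ + 3) * L0 ^ (ℓ + 2) :=
    mul_pos (div_pos (cConst_pos hl) (by linarith)) (rpow_pos_of_pos hL _)
  set A := cConst ℓ / (2 * ℓ + 3) * L0 ^ (ℓ + 2) with hA_def
  refine ⟨A * c, A * C, by positivity, by positivity, fun y r hr hγ hγG ↦ ?_⟩
  obtain ⟨hlower, hupper⟩ := hprofile _ hγ hγG
  have hA_nonneg : 0 ≤ A / r ^ 4 := by positivity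
  rw [pres_eq_mul_pressureProfile hL hr, ← hA_def,
    show k + ℓ + 5 / 2 = k + (ℓ + 3 / 2) + 1 by ring]
  constructor
  · calc A * c * charFn L0 y r ^ (k + (ℓ + 3 / 2) + 1) / r ^ 4
        = A / r ^ 4 * (c * charFn L0 y r ^ (k + (ℓ + 3 / 2) + 1)) := by ring
      _ ≤ _ := mul_le_mul_of_nonneg_left hlower hA_nonneg
  · calc A / r ^ 4 * pressureProfile k (ℓ + 3 / 2) (charFn L0 y r)
        ≤ A / r ^ 4 * (C * charFn L0 y r ^ (k + (ℓ + 3 / 2) + 1)) :=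
        mul_le_mul_of_nonneg_left hupper hA_nonneg
      _ = _ := by ring

lemma innerRadius_pos (hL : 0 < L0) (y : ℝ → ℝ) : 0 < innerRadius L0 y :=
  mul_pos (sqrt_pos.2 hL) (exp_pos _)

namespace QuasiShell

lemma antitoneOn (hy : QuasiShell k ℓ L0 y) (hl : -(3 / 2) ≤ ℓ) : AntitoneOn y (Ici 0) := by
  obtain ⟨hcont, hderiv⟩ := hy
  refine antitoneOn_of_hasDerivWithinAt_nonpos (convex_Ici 0) hcont.continuousOn
    (fun r hr ↦ (hderiv r (by simpa using hr)).2.hasDerivWithinAt) fun r hr ↦ ?_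
  replace hr : 0 < r := by simpa using hr
  have hfactor : 0 ≤ (1 - 2 * hawkingMass k ℓ L0 y r / r)⁻¹ :=
    inv_nonneg.2 (sub_nonneg.2 (hderiv r hr).1.le)
  have hp := pres_nonneg (k := k) (L0 := L0) (y := y) hl hr.le
  have hm := hawkingMass_nonneg (k := k) (ℓ := ℓ) (L0 := L0) (y := y) (r := r)
  rw [neg_mul, neg_nonpos]
  positivity

lemma charFn_le_log {c : ℝ} (hy : QuasiShell k ℓ L0 y) (hl : -(3 / 2) ≤ ℓ) (hL : 0 < L0)
    (hr : 0 < r) (hrc : r ≤ c * innerRadius L0 y) : charFn L0 y r ≤ log c := by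
  have hmono : y r ≤ y 0 := hy.antitoneOn hl self_mem_Ici hr.le hr.le
  have hlog : log (r / innerRadius L0 y) = y 0 - log (√L0 / r) := by
    have hs := sqrt_pos.2 hL
    rw [innerRadius, log_div hr.ne' (by positivity), log_mul hs.ne' (exp_pos _).ne', log_exp,
      log_div hs.ne' hr.ne']
    ring
  calc charFn L0 y r = y r - log (√L0 / r) := charFn_eq_sub_log hL.le hr.le
    _ ≤ log (r / innerRadius L0 y) := by linarith
    _ ≤ log c := log_le_log (div_pos hr (innerRadius_pos hL y))
        ((div_le_iff₀ (innerRadius_pos hL y)).2 hrc)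

end QuasiShell

end Matter

/-- Two-sided bounds `C_l γ^{k+ℓ+5/2}/r⁴ ≤ p ≤ C_u γ^{k+ℓ+5/2}/r⁴`
on `[R₀, 2R₀]` where `γ ≥ 0`, with constants depending only on `k, ℓ, L₀`. -/
theorem pres_bounds (k ℓ L0 : ℝ) (hk : 0 ≤ k) (hl : -(1 / 2) ≤ ℓ) (hL : 0 < L0) :
    ∃ Cl Cu : ℝ, 0 < Cl ∧ 0 < Cu ∧
      ∀ y : ℝ → ℝ, QuasiShell k ℓ L0 y →
        ∀ r, innerRadius L0 y ≤ r → r ≤ 2 * innerRadius L0 y →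
          0 ≤ charFn L0 y r →
          Cl * charFn L0 y r ^ (k + ℓ + 5 / 2) / r ^ 4 ≤ pres k ℓ L0 y r ∧
          pres k ℓ L0 y r ≤ Cu * charFn L0 y r ^ (k + ℓ + 5 / 2) / r ^ 4 := by
  obtain ⟨Cl, Cu, hCl, hCu, h⟩ :=
    pres_bounds_general (k := k) (ℓ := ℓ) (by linarith) (by linarith) hL (log 2)
  refine ⟨Cl, Cu, hCl, hCu, fun y hy r hr hr2 hγ ↦ ?_⟩
  have hr_pos : 0 < r := (innerRadius_pos hL y).trans_le hr
  exact h y r hr_pos hγ (hy.charFn_le_log (by linarith) hL hr_pos hr2)
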